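/- arXiv:2109.02547 — 2 statements merged into one kernel-verified Lean document; each statement's English description precedes it below -/
import Mathlib

section
/- Let m ≥ 2 and α > r > 0. Let z ∈ B_r(0) ⊂ ℝ^m and z′ ∈ B_r(0) ⊂ ℝ^{m+1} with ‖z‖ = ‖z′‖. Then T^{(α,m+1)}(z′) ≥ T^{(α,m)}(z), where T^{(α,m)}(z) := ∫_{B_r(0)}(α − ‖x‖) dμ^{r,m}(x) − ∫_{B_α(z) ∩ B_r(0)}(α − d(z,x)) dμ^{r,m}(x) and μ^{r,m} is the uniform probability measure on the sphere of radius r centered at the origin in ℝ^m. -/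
open MeasureTheory Metric Real
open scoped ENNReal

/-- The uniform probability measure on the sphere of radius `s` centered at the origin
in `ℝ^m`; for `s = 0` it is the Dirac measure at the origin. -/
noncomputable def sphereUniform (m : ℕ) (s : ℝ) : Measure (EuclideanSpace ℝ (Fin m)) :=
  if s = 0 then Measure.dirac 0
  else (μH[(m : ℝ) - 1] (sphere (0 : EuclideanSpace ℝ (Fin m)) s))⁻¹ •
    (μH[(m : ℝ) - 1]).restrict (sphere (0 : EuclideanSpace ℝ (Fin m)) s)

/-- `T^{(α,m)}(z) = ∫_{B_r(0)}(α − ‖x‖) dμ^{r,m}(x) − ∫_{B_α(z) ∩ B_r(0)}(α − d(z,x)) dμ^{r,m}(x)`. -/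
noncomputable def Tfun (m : ℕ) (α r : ℝ) (z : EuclideanSpace ℝ (Fin m)) : ℝ :=
  (∫ x in closedBall (0 : EuclideanSpace ℝ (Fin m)) r, (α - ‖x‖) ∂(sphereUniform m r)) -
    ∫ x in closedBall z α ∩ closedBall (0 : EuclideanSpace ℝ (Fin m)) r,
      (α - dist z x) ∂(sphereUniform m r)

/-! On the sphere `T` subtracts from the constant `α - r` the integral of `max 0 (α - d(z, x))`,
which is a convex function `φ` of `s = ⟪z, x⟫` because `s ↦ √(r² + ‖z‖² - 2s)` is concave. So it
suffices that `∫ φ ⟪z, x⟫` does not increase with the dimension. By rotation invariance this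
integral depends only on `‖z‖`; by invariance under `x ↦ -x` and Jensen's inequality on each
segment `[-x, x]`, it increases with `‖z‖`. Let `A : ℝ^m → ℝ^n` be an isometry followed by scaling
with `‖z‖ / r`, so that `‖A y‖ = ‖z'‖` for `y` on the sphere of radius `r`. Then the integral of
`φ ⟪z', x⟫` over the sphere of `ℝ^n` is the average of `φ ⟪A y, x⟫ = φ ⟪y, A† x⟫` over both
spheres. For fixed `x` the average over `y` is the integral on the sphere of `ℝ^m` belonging to the
vector `A† x`, which is no longer than `z`. -/

open Module Set
open scoped InnerProductSpace Pointwise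

section HausdorffMeasureSphere

variable {E : Type*} [NormedAddCommGroup E] [InnerProductSpace ℝ E]

lemma ball_subset_orthogonalProjectionOnto_image_sphere {v : E} (hv : ‖v‖ = 1) (r : ℝ) :
    ball (0 : (ℝ ∙ v)ᗮ) r ⊆ (ℝ ∙ v)ᗮ.orthogonalProjectionOnto '' sphere (0 : E) r := by
  intro y hy
  have hr : 0 < r := pos_of_mem_ball hy
  have hyr : ‖y‖ ^ 2 ≤ r ^ 2 := by
    gcongr
    exact (mem_ball_zero_iff.mp hy).le
  have hyv : ⟪(y : E), v⟫_ℝ = 0 := Submodule.mem_orthogonal_singleton_iff_inner_left.mp y.2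
  refine ⟨y + √(r ^ 2 - ‖y‖ ^ 2) • v, ?_, ?_⟩
  · rw [mem_sphere_zero_iff_norm, ← sq_eq_sq₀ (norm_nonneg _) hr.le, norm_add_sq_real,
      real_inner_smul_right, hyv, norm_smul, hv, Real.norm_eq_abs, mul_one, sq_abs,
      Real.sq_sqrt (sub_nonneg.mpr hyr), Submodule.coe_norm]
    ring
  · rw [map_add, map_smul, Submodule.orthogonalProjectionOnto_mem_subspace_eq_self,
      Submodule.orthogonalProjectionOnto_orthogonalComplement_singleton_eq_zero, smul_zero,
      add_zero]

lemma hemisphere_subset_image_stereoInvFun {v : E} (hv : ‖v‖ = 1) :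
    {x ∈ sphere (0 : E) 1 | ⟪v, x⟫_ℝ ≤ 0} ⊆
      (fun w : (ℝ ∙ v)ᗮ => (stereoInvFun hv w : E)) '' closedBall 0 2 := by
  rintro x ⟨hx, hvx⟩
  have hxv : x ≠ v := by
    rintro rfl
    rw [real_inner_self_eq_norm_sq, hv] at hvx
    norm_num at hvx
  refine ⟨stereoToFun v x, ?_, congrArg Subtype.val (stereo_left_inv hv (x := ⟨x, hx⟩) hxv)⟩
  have hscale : ‖2 / (1 - ⟪v, x⟫_ℝ)‖ ≤ 2 := by
    rw [Real.norm_of_nonneg (div_nonneg zero_le_two (by linarith)), div_le_iff₀ (by linarith)]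
    linarith
  have hproj : ‖(ℝ ∙ v)ᗮ.orthogonalProjectionOnto x‖ ≤ 1 :=
    (Submodule.norm_orthogonalProjectionOnto_apply_le _ x).trans_eq (mem_sphere_zero_iff_norm.mp hx)
  rw [mem_closedBall_zero_iff, stereoToFun_apply, norm_smul, innerSL_apply_apply]
  linarith [mul_le_mul hscale hproj (norm_nonneg _) zero_le_two]

variable [MeasurableSpace E] [BorelSpace E] {n : ℕ} [Fact (finrank ℝ E = n + 1)]

lemma isAddHaarMeasure_hausdorffMeasure_orthogonal_span_singleton {v : E} (hv : v ≠ 0) :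
    (μH[n] : Measure (ℝ ∙ v)ᗮ).IsAddHaarMeasure := by
  have := FiniteDimensional.of_fact_finrank_eq_succ (K := ℝ) (V := E) n
  rw [← Submodule.finrank_orthogonal_span_singleton (𝕜 := ℝ) (n := n) hv]
  infer_instance

lemma hausdorffMeasure_sphere_pos {r : ℝ} (hr : 0 < r) : 0 < μH[n] (sphere (0 : E) r) := by
  have := FiniteDimensional.of_fact_finrank_eq_succ (K := ℝ) (V := E) n
  have : Nontrivial E := nontrivial_of_finrank_eq_succ (R := ℝ) (Fact.out : finrank ℝ E = n + 1)
  obtain ⟨v, hv⟩ := exists_norm_eq E zero_le_one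
  have := isAddHaarMeasure_hausdorffMeasure_orthogonal_span_singleton (n := n)
    (norm_ne_zero_iff.mp (hv.trans_ne one_ne_zero))
  calc (0 : ℝ≥0∞) < μH[n] (ball (0 : (ℝ ∙ v)ᗮ) r) := measure_ball_pos _ _ hr
    _ ≤ μH[n] ((ℝ ∙ v)ᗮ.orthogonalProjectionOnto '' sphere (0 : E) r) :=
      measure_mono (ball_subset_orthogonalProjectionOnto_image_sphere hv r)
    _ ≤ μH[n] (sphere (0 : E) r) :=
      hausdorffMeasure_orthogonalProjectionOnto_le _ _ _ n.cast_nonneg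

lemma hausdorffMeasure_hemisphere_lt_top {v : E} (hv : ‖v‖ = 1) :
    μH[n] {x ∈ sphere (0 : E) 1 | ⟪v, x⟫_ℝ ≤ 0} < ∞ := by
  have := FiniteDimensional.of_fact_finrank_eq_succ (K := ℝ) (V := E) n
  have := isAddHaarMeasure_hausdorffMeasure_orthogonal_span_singleton (n := n)
    (norm_ne_zero_iff.mp (hv.trans_ne one_ne_zero))
  have hsmooth : ContDiff ℝ 1 fun w : (ℝ ∙ v)ᗮ => (stereoInvFun hv w : E) :=
    contDiff_stereoInvFunAux.comp (ℝ ∙ v)ᗮ.subtypeL.contDiff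
  have hcompact : IsCompact (closedBall (0 : (ℝ ∙ v)ᗮ) 2) := isCompact_closedBall 0 2
  obtain ⟨K, hK⟩ :=
    hsmooth.locallyLipschitz.locallyLipschitzOn.exists_lipschitzOnWith_of_compact hcompact
  calc μH[n] {x ∈ sphere (0 : E) 1 | ⟪v, x⟫_ℝ ≤ 0}
    _ ≤ μH[n] ((fun w : (ℝ ∙ v)ᗮ => (stereoInvFun hv w : E)) '' closedBall 0 2) :=
      measure_mono (hemisphere_subset_image_stereoInvFun hv)
    _ ≤ (K : ℝ≥0∞) ^ (n : ℝ) * μH[n] (closedBall (0 : (ℝ ∙ v)ᗮ) 2) :=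
      hK.hausdorffMeasure_image_le n.cast_nonneg
    _ < ∞ := ENNReal.mul_lt_top
      (ENNReal.rpow_lt_top_of_nonneg n.cast_nonneg ENNReal.coe_ne_top) hcompact.measure_lt_top

lemma hausdorffMeasure_unitSphere_lt_top : μH[n] (sphere (0 : E) 1) < ∞ := by
  have : Nontrivial E := nontrivial_of_finrank_eq_succ (R := ℝ) (Fact.out : finrank ℝ E = n + 1)
  obtain ⟨v, hv⟩ := exists_norm_eq E zero_le_one
  have hcover : sphere (0 : E) 1 ⊆
      {x ∈ sphere (0 : E) 1 | ⟪v, x⟫_ℝ ≤ 0} ∪ {x ∈ sphere (0 : E) 1 | ⟪-v, x⟫_ℝ ≤ 0} := by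
    intro x hx
    simp only [mem_union, mem_ofPred_eq, inner_neg_left, neg_nonpos]
    exact (le_total ⟪v, x⟫_ℝ 0).imp (⟨hx, ·⟩) (⟨hx, ·⟩)
  exact (measure_mono hcover).trans_lt (measure_union_lt_top
    (hausdorffMeasure_hemisphere_lt_top hv)
    (hausdorffMeasure_hemisphere_lt_top ((norm_neg v).trans hv)))

lemma hausdorffMeasure_sphere_lt_top {r : ℝ} (hr : 0 < r) : μH[n] (sphere (0 : E) r) < ∞ := by
  have hscale : sphere (0 : E) r = r • (sphere (0 : E) 1 : Set E) := by
    rw [smul_sphere' hr.ne', smul_zero, Real.norm_of_nonneg hr.le, mul_one]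
  rw [hscale, Measure.hausdorffMeasure_smul₀ n.cast_nonneg hr.ne']
  exact ENNReal.mul_lt_top ENNReal.coe_lt_top hausdorffMeasure_unitSphere_lt_top

end HausdorffMeasureSphere

lemma integrable_comp_of_continuous_of_ae_abs_le {Ω : Type*} [MeasurableSpace Ω] {μ : Measure Ω}
    [IsFiniteMeasure μ] {φ : ℝ → ℝ} (hφ : Continuous φ) {f : Ω → ℝ}
    (hf : AEStronglyMeasurable f μ) {C : ℝ} (hC : ∀ᵐ ω ∂μ, |f ω| ≤ C) :
    Integrable (fun ω => φ (f ω)) μ := by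
  obtain ⟨B, hB⟩ := isCompact_Icc.exists_bound_of_continuousOn (hφ.continuousOn (s := Icc (-C) C))
  exact .of_bound (hφ.comp_aestronglyMeasurable hf) B (hC.mono fun ω hω => hB _ (abs_le.mp hω))

/-- A probability measure carried by the sphere of radius `r` about the origin and invariant under
all linear isometries: the abstract form in which spheres of different dimension are compared. -/
structure IsUniformOnSphere {E : Type*} [NormedAddCommGroup E] [InnerProductSpace ℝ E]
    [MeasurableSpace E] (μ : Measure E) (r : ℝ) : Prop where
  isProbabilityMeasure : IsProbabilityMeasure μ
  ae_norm_eq : ∀ᵐ x ∂μ, ‖x‖ = r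
  measurePreserving : ∀ L : E ≃ₗᵢ[ℝ] E, MeasurePreserving L μ μ

namespace IsUniformOnSphere

variable {E : Type*} [NormedAddCommGroup E] [InnerProductSpace ℝ E] [MeasurableSpace E]
  {μ : Measure E} {r : ℝ}

lemma ae_abs_inner_le (hμ : IsUniformOnSphere μ r) (u : E) :
    ∀ᵐ x ∂μ, |⟪u, x⟫_ℝ| ≤ ‖u‖ * r := by
  filter_upwards [hμ.ae_norm_eq] with x hx
  exact hx ▸ abs_real_inner_le_norm u x

variable [BorelSpace E]

lemma integral_comp_inner_eq_of_norm_eq (hμ : IsUniformOnSphere μ r) {u v : E} (huv : ‖u‖ = ‖v‖)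
    (φ : ℝ → ℝ) : ∫ x, φ ⟪u, x⟫_ℝ ∂μ = ∫ x, φ ⟪v, x⟫_ℝ ∂μ := by
  let L : E ≃ₗᵢ[ℝ] E := (ℝ ∙ (u - v))ᗮ.reflection
  have hL : L u = v := Submodule.reflection_sub huv
  rw [← (hμ.measurePreserving L).integral_comp L.toHomeomorph.measurableEmbedding
    (fun x => φ ⟪v, x⟫_ℝ)]
  simp only [← hL, L.inner_map_map]

variable {φ : ℝ → ℝ}

lemma integrable_comp_inner (hμ : IsUniformOnSphere μ r) (hφ : Continuous φ) (u : E) :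
    Integrable (fun x => φ ⟪u, x⟫_ℝ) μ := by
  have := hμ.isProbabilityMeasure
  refine integrable_comp_of_continuous_of_ae_abs_le hφ ?_ (hμ.ae_abs_inner_le u)
  exact (innerSL ℝ u).continuous.measurable.aestronglyMeasurable

lemma integral_comp_mul_inner_le (hμ : IsUniformOnSphere μ r) (hφ : Continuous φ) {v : E}
    (hconv : ConvexOn ℝ (Icc (-(‖v‖ * r)) (‖v‖ * r)) φ) {c : ℝ} (hc₀ : 0 ≤ c) (hc₁ : c ≤ 1) :
    ∫ x, φ (c * ⟪v, x⟫_ℝ) ∂μ ≤ ∫ x, φ ⟪v, x⟫_ℝ ∂μ := by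
  have hpos := (hμ.integrable_comp_inner hφ v).const_mul ((1 + c) / 2)
  have hneg := (hμ.integrable_comp_inner hφ (-v)).const_mul ((1 - c) / 2)
  have hcv : Integrable (fun x => φ (c * ⟪v, x⟫_ℝ)) μ := by
    simpa only [real_inner_smul_left] using hμ.integrable_comp_inner hφ (c • v)
  calc ∫ x, φ (c * ⟪v, x⟫_ℝ) ∂μ
    _ ≤ ∫ x, ((1 + c) / 2 * φ ⟪v, x⟫_ℝ + (1 - c) / 2 * φ ⟪-v, x⟫_ℝ) ∂μ := by
      refine integral_mono_ae hcv (hpos.add hneg) ?_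
      filter_upwards [hμ.ae_abs_inner_le v] with x hx
      obtain ⟨hl, hu⟩ := abs_le.mp hx
      have hmem : ⟪v, x⟫_ℝ ∈ Icc (-(‖v‖ * r)) (‖v‖ * r) := ⟨hl, hu⟩
      have hmem_neg : -⟪v, x⟫_ℝ ∈ Icc (-(‖v‖ * r)) (‖v‖ * r) := ⟨neg_le_neg hu, neg_le.mp hl⟩
      have hjensen := hconv.2 hmem hmem_neg (show 0 ≤ (1 + c) / 2 by linarith)
        (show 0 ≤ (1 - c) / 2 by linarith) (by ring)
      have hcomb : (1 + c) / 2 * ⟪v, x⟫_ℝ + (1 - c) / 2 * -⟪v, x⟫_ℝ = c * ⟪v, x⟫_ℝ := by ring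
      simpa only [smul_eq_mul, hcomb, inner_neg_left] using hjensen
    _ = ∫ x, φ ⟪v, x⟫_ℝ ∂μ := by
      rw [integral_add hpos hneg, integral_const_mul, integral_const_mul,
        hμ.integral_comp_inner_eq_of_norm_eq (norm_neg v)]
      ring

lemma integral_comp_inner_le_of_norm_le (hμ : IsUniformOnSphere μ r) (hφ : Continuous φ)
    {u v : E} (hconv : ConvexOn ℝ (Icc (-(‖v‖ * r)) (‖v‖ * r)) φ) (huv : ‖u‖ ≤ ‖v‖) :
    ∫ x, φ ⟪u, x⟫_ℝ ∂μ ≤ ∫ x, φ ⟪v, x⟫_ℝ ∂μ := by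
  have hnorm : ‖u‖ = ‖(‖u‖ / ‖v‖) • v‖ := by
    rw [norm_smul, norm_div, norm_norm, norm_norm,
      div_mul_cancel_of_imp fun hv => le_antisymm (huv.trans_eq hv) (norm_nonneg u)]
  rw [hμ.integral_comp_inner_eq_of_norm_eq hnorm]
  simp only [real_inner_smul_left]
  exact hμ.integral_comp_mul_inner_le hφ hconv (by positivity)
    (div_le_one_of_le₀ huv (norm_nonneg v))

variable {F : Type*} [NormedAddCommGroup F] [InnerProductSpace ℝ F] [MeasurableSpace F]
  [BorelSpace F] {ν : Measure F} [SecondCountableTopology E]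

lemma integrable_prod_comp_inner (hμ : IsUniformOnSphere μ r)
    (hν : IsUniformOnSphere ν r) (hφ : Continuous φ) (J : E →L[ℝ] F) :
    Integrable (fun p : E × F => φ ⟪J p.1, p.2⟫_ℝ) (μ.prod ν) := by
  have := hμ.isProbabilityMeasure
  have := hν.isProbabilityMeasure
  have hcont : Continuous fun p : E × F => ⟪J p.1, p.2⟫_ℝ := by fun_prop
  refine integrable_comp_of_continuous_of_ae_abs_le hφ hcont.measurable.aestronglyMeasurable
    (C := ‖J‖ * r * r) ?_
  filter_upwards [Measure.quasiMeasurePreserving_fst.ae hμ.ae_norm_eq,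
    Measure.quasiMeasurePreserving_snd.ae hν.ae_norm_eq] with p hp₁ hp₂
  calc |⟪J p.1, p.2⟫_ℝ| ≤ ‖J p.1‖ * ‖p.2‖ := abs_real_inner_le_norm _ _
    _ ≤ ‖J‖ * ‖p.1‖ * ‖p.2‖ := by gcongr; exact J.le_opNorm _
    _ = ‖J‖ * r * r := by rw [hp₁, hp₂]

theorem integral_comp_inner_le_of_linearIsometry [CompleteSpace E] [CompleteSpace F]
    (hμ : IsUniformOnSphere μ r) (hν : IsUniformOnSphere ν r) (hr : 0 < r) (J : E →ₗᵢ[ℝ] F)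
    (hφ : Continuous φ) {z : E} {z' : F} (hz : ‖z‖ = ‖z'‖)
    (hconv : ConvexOn ℝ (Icc (-(‖z‖ * r)) (‖z‖ * r)) φ) :
    ∫ x, φ ⟪z', x⟫_ℝ ∂ν ≤ ∫ y, φ ⟪z, y⟫_ℝ ∂μ := by
  have := hμ.isProbabilityMeasure
  have := hν.isProbabilityMeasure
  let A : E →L[ℝ] F := (‖z‖ / r) • J.toContinuousLinearMap
  have hA (y : E) : ‖A y‖ = ‖z‖ / r * ‖y‖ := by
    simp [A, norm_smul, abs_of_pos hr]
  have hA_adjoint (x : F) : ‖A.adjoint x‖ ≤ ‖z‖ / r * ‖x‖ := by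
    have : ‖A.adjoint‖ ≤ ‖z‖ / r := by
      rw [LinearIsometryEquiv.norm_map]
      exact A.opNorm_le_bound (by positivity) fun y => (hA y).le
    exact A.adjoint.le_of_opNorm_le this x
  have hint := hμ.integrable_prod_comp_inner hν hφ A
  calc ∫ x, φ ⟪z', x⟫_ℝ ∂ν
    _ = ∫ _y, ∫ x, φ ⟪z', x⟫_ℝ ∂ν ∂μ := by simp
    _ = ∫ y, ∫ x, φ ⟪A y, x⟫_ℝ ∂ν ∂μ := by
      refine integral_congr_ae ?_
      filter_upwards [hμ.ae_norm_eq] with y hy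
      refine hν.integral_comp_inner_eq_of_norm_eq ?_ φ
      rw [hA, hy, div_mul_cancel₀ _ hr.ne', hz]
    _ = ∫ x, ∫ y, φ ⟪A y, x⟫_ℝ ∂μ ∂ν := integral_integral_swap hint
    _ ≤ ∫ _x, ∫ y, φ ⟪z, y⟫_ℝ ∂μ ∂ν := by
      refine integral_mono_ae hint.integral_prod_right (integrable_const _) ?_
      filter_upwards [hν.ae_norm_eq] with x hx
      have hle : ‖A.adjoint x‖ ≤ ‖z‖ := by
        simpa only [hx, div_mul_cancel₀ _ hr.ne'] using hA_adjoint x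
      simpa only [← A.adjoint_inner_right, real_inner_comm (A.adjoint x)] using
        hμ.integral_comp_inner_le_of_norm_le hφ hconv hle
    _ = ∫ y, φ ⟪z, y⟫_ℝ ∂μ := by simp

end IsUniformOnSphere

lemma nonempty_linearIsometry_of_finrank_le {E F : Type*} [NormedAddCommGroup E]
    [InnerProductSpace ℝ E] [FiniteDimensional ℝ E] [NormedAddCommGroup F] [InnerProductSpace ℝ F]
    [FiniteDimensional ℝ F] (h : finrank ℝ E ≤ finrank ℝ F) : Nonempty (E →ₗᵢ[ℝ] F) := by
  let b := stdOrthonormalBasis ℝ E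
  let b' := stdOrthonormalBasis ℝ F
  let f : E →ₗ[ℝ] F := b.toBasis.constr ℝ (b' ∘ Fin.castLE h)
  have hf : f ∘ b.toBasis = b' ∘ Fin.castLE h := funext (b.toBasis.constr_basis ℝ _)
  refine ⟨f.isometryOfOrthonormal (v := b.toBasis) ?_ ?_⟩
  · exact b.coe_toBasis ▸ b.orthonormal
  · exact hf ▸ b'.orthonormal.comp _ (Fin.castLE_injective h)

lemma isUniformOnSphere_sphereUniform {m : ℕ} (hm : 1 ≤ m) {r : ℝ} (hr : 0 < r) :
    IsUniformOnSphere (sphereUniform m r) r := by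
  obtain ⟨n, rfl⟩ := Nat.exists_eq_add_of_le' hm
  have : Fact (finrank ℝ (EuclideanSpace ℝ (Fin (n + 1))) = n + 1) := ⟨finrank_euclideanSpace_fin⟩
  have hdim : ((n + 1 : ℕ) : ℝ) - 1 = n := by simp
  simp only [sphereUniform, if_neg hr.ne', hdim]
  refine ⟨⟨?_⟩, ?_, fun L => ?_⟩
  · rw [Measure.smul_apply, Measure.restrict_apply_univ, smul_eq_mul]
    exact ENNReal.inv_mul_cancel (hausdorffMeasure_sphere_pos (n := n) hr).ne'
      (hausdorffMeasure_sphere_lt_top (n := n) hr).ne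
  · refine Measure.ae_smul_measure ?_ _
    filter_upwards [ae_restrict_mem isClosed_sphere.measurableSet] with x hx
    exact mem_sphere_zero_iff_norm.mp hx
  · have hL : L ⁻¹' sphere 0 r = sphere (0 : EuclideanSpace ℝ (Fin (n + 1))) r := by
      rw [L.preimage_sphere, map_zero]
    have hrestrict : MeasurePreserving L (μH[n].restrict (L ⁻¹' sphere 0 r))
        (μH[n].restrict (sphere 0 r)) :=
      (L.toIsometryEquiv.measurePreserving_hausdorffMeasure n).restrict_preimage
        isClosed_sphere.measurableSet
    rw [hL] at hrestrict
    exact hrestrict.smul_measure _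

/-- The positive part of `α - d(z, x)` for `‖x‖ = r` and `‖z‖ = t`, as a function of `s = ⟪z, x⟫`.
The positive part encodes the restriction of the integral to the ball `B_α(z)`. -/
noncomputable def sphereCone (α r t s : ℝ) : ℝ :=
  max 0 (α - √(r ^ 2 + t ^ 2 - 2 * s))

lemma continuous_sphereCone (α r t : ℝ) : Continuous (sphereCone α r t) := by
  unfold sphereCone
  fun_prop

lemma convexOn_sphereCone (α r t : ℝ) :
    ConvexOn ℝ (Iic ((r ^ 2 + t ^ 2) / 2)) (sphereCone α r t) := by
  let g : ℝ →ᵃ[ℝ] ℝ := AffineMap.const ℝ ℝ (r ^ 2 + t ^ 2) - (2 : ℝ) • AffineMap.id ℝ ℝ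
  have hpre : g ⁻¹' Ici 0 = Iic ((r ^ 2 + t ^ 2) / 2) := by
    ext s
    simp [g, le_div_iff₀, mul_comm]
  have hconc : ConcaveOn ℝ (Iic ((r ^ 2 + t ^ 2) / 2)) fun s => √(r ^ 2 + t ^ 2 - 2 * s) :=
    hpre ▸ Real.strictConcaveOn_sqrt.concaveOn.comp_affineMap g
  exact (convexOn_const 0 (convex_Iic _)).sup ((convexOn_const α (convex_Iic _)).sub hconc)

lemma sphereCone_inner_eq {E : Type*} [NormedAddCommGroup E] [InnerProductSpace ℝ E] (α : ℝ)
    (z x : E) : sphereCone α ‖x‖ ‖z‖ ⟪z, x⟫_ℝ = max 0 (α - dist z x) := by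
  rw [sphereCone, dist_eq_norm, ← Real.sqrt_sq (norm_nonneg (z - x)), norm_sub_sq_real]
  ring_nf

lemma Tfun_eq_sub_integral_sphereCone {m : ℕ} (hm : 1 ≤ m) (α : ℝ) {r : ℝ} (hr : 0 < r)
    (z : EuclideanSpace ℝ (Fin m)) :
    Tfun m α r z = (α - r) - ∫ x, sphereCone α r ‖z‖ ⟪z, x⟫_ℝ ∂(sphereUniform m r) := by
  have hμ := isUniformOnSphere_sphereUniform hm hr
  have := hμ.isProbabilityMeasure
  have hball : ∀ᵐ x ∂(sphereUniform m r), x ∈ closedBall 0 r :=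
    hμ.ae_norm_eq.mono fun x hx => mem_closedBall_zero_iff.mpr hx.le
  have hfirst : ∫ x in closedBall 0 r, (α - ‖x‖) ∂(sphereUniform m r) = α - r := by
    rw [Measure.restrict_eq_self_of_ae_mem hball,
      integral_congr_ae (hμ.ae_norm_eq.mono fun x hx => congrArg (α - ·) hx)]
    simp
  have hsecond : ∫ x in closedBall z α ∩ closedBall 0 r, (α - dist z x) ∂(sphereUniform m r) =
      ∫ x, sphereCone α r ‖z‖ ⟪z, x⟫_ℝ ∂(sphereUniform m r) := by
    rw [← integral_indicator (measurableSet_closedBall.inter measurableSet_closedBall)]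
    refine integral_congr_ae ?_
    filter_upwards [hμ.ae_norm_eq, hball] with x hx hxr
    nth_rw 2 [← hx]
    rw [sphereCone_inner_eq]
    by_cases hzx : dist z x ≤ α
    · have hmem : x ∈ closedBall z α ∩ closedBall 0 r := ⟨mem_closedBall'.mpr hzx, hxr⟩
      rw [indicator_of_mem hmem, max_eq_right (sub_nonneg.mpr hzx)]
    · rw [indicator_of_notMem fun h => hzx (mem_closedBall'.mp h.1),
        max_eq_left (sub_nonpos.mpr (le_of_not_ge hzx))]
  rw [Tfun, hfirst, hsecond]

theorem stmt10_general {m n : ℕ} (hm : 1 ≤ m) (hmn : m ≤ n) {r : ℝ} (hr : 0 < r) (α : ℝ)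
    {z : EuclideanSpace ℝ (Fin m)} {z' : EuclideanSpace ℝ (Fin n)} (hnorm : ‖z‖ = ‖z'‖) :
    Tfun m α r z ≤ Tfun n α r z' := by
  obtain ⟨J⟩ : Nonempty (EuclideanSpace ℝ (Fin m) →ₗᵢ[ℝ] EuclideanSpace ℝ (Fin n)) :=
    nonempty_linearIsometry_of_finrank_le (by simpa only [finrank_euclideanSpace_fin] using hmn)
  have hIcc : Icc (-(‖z‖ * r)) (‖z‖ * r) ⊆ Iic ((r ^ 2 + ‖z‖ ^ 2) / 2) := fun s hs => by
    rw [mem_Iic]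
    linarith [hs.2, two_mul_le_add_sq ‖z‖ r]
  have hcompare := (isUniformOnSphere_sphereUniform hm hr).integral_comp_inner_le_of_linearIsometry
    (isUniformOnSphere_sphereUniform (hm.trans hmn) hr) hr J (continuous_sphereCone α r ‖z‖) hnorm
    ((convexOn_sphereCone α r ‖z‖).subset hIcc (convex_Icc _ _))
  rw [Tfun_eq_sub_integral_sphereCone hm α hr, Tfun_eq_sub_integral_sphereCone (hm.trans hmn) α hr,
    ← hnorm]
  exact sub_le_sub_left hcompare _

/-- For `m ≥ 2`, `α > r > 0`, `z ∈ B_r(0) ⊂ ℝ^m` and `z′ ∈ B_r(0) ⊂ ℝ^{m+1}` with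
`‖z‖ = ‖z′‖`, one has `T^{(α,m+1)}(z′) ≥ T^{(α,m)}(z)`. -/
theorem stmt10 (m : ℕ) (hm : 2 ≤ m) (r α : ℝ) (hr : 0 < r) (hα : r < α)
    (z : EuclideanSpace ℝ (Fin m)) (z' : EuclideanSpace ℝ (Fin (m + 1)))
    (hz : z ∈ closedBall (0 : EuclideanSpace ℝ (Fin m)) r)
    (hz' : z' ∈ closedBall (0 : EuclideanSpace ℝ (Fin (m + 1))) r)
    (hnorm : ‖z‖ = ‖z'‖) :
    Tfun m α r z ≤ Tfun (m + 1) α r z' := by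
  exact stmt10_general (by omega) m.le_succ hr α hnorm
end

section
/- Let m ≥ 2, let μ be a probability measure on B_r(0) ⊂ ℝ^m invariant under rotations about the origin, let ε ∈ (0,1), and let α = r(1+ε). Then for every z ∈ B_r(0) with ‖z‖ ≥ εr, H^{(α,μ,m)}(z) ≥ rε²/8 − r·√(πm/2)·(1 − ε²/16)^{(m-2)/2}, where H^{(α,μ,m)}(z) := ∫_{B_r(0)}(α − ‖x‖) dμ(x) − ∫_{B_α(z) ∩ B_r(0)}(α − d(z,x)) dμ(x). -/
open MeasureTheory Metric Real
open scoped ENNReal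

/-- `H^{(α,μ,m)}(z) = ∫_{B_r(0)}(α − ‖x‖) dμ(x) − ∫_{B_α(z) ∩ B_r(0)}(α − d(z,x)) dμ(x)`. -/
noncomputable def Hfun (m : ℕ) (α r : ℝ) (μ : Measure (EuclideanSpace ℝ (Fin m)))
    (z : EuclideanSpace ℝ (Fin m)) : ℝ :=
  (∫ x in closedBall (0 : EuclideanSpace ℝ (Fin m)) r, (α - ‖x‖) ∂μ) -
    ∫ x in closedBall z α ∩ closedBall (0 : EuclideanSpace ℝ (Fin m)) r,
      (α - dist z x) ∂μ

/-!
The quantity `H` is the drop, from the origin to `z`, of the potential `y ↦ ∫ (α - d(y, x))⁺ dμ(x)`.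
Outside the cone of directions making a small angle with `z`, moving from the origin to `z`
increases the distance to `x` by at least `rε²/8`, and the integrand drops by as much; inside the
cone it rises by at most `r`. For a rotation-invariant `μ` the cone has the same mass about every
axis, so by Fubini this mass is the proportion of the unit ball that the cone occupies, which is at
most `(1 - t²)^(m/2)` because the cone meets the unit ball inside a ball of radius `√(1 - t²)`.
This replaces the comparison with the uniform measure on the sphere.
-/

section CircularCone

variable {E : Type*} [NormedAddCommGroup E] [InnerProductSpace ℝ E]

/-- The open circular cone about the axis `z` with half-angle `arccos t`, used to measure the
directions close to that of `z`. The strict inequality makes it empty for `z = 0`. -/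
def circularCone (t : ℝ) (z : E) : Set E :=
  {x | t * ‖x‖ * ‖z‖ < inner ℝ x z}

namespace circularCone

theorem mem_comm {t : ℝ} {x z : E} : x ∈ circularCone t z ↔ z ∈ circularCone t x := by
  simp only [circularCone, Set.mem_ofPred_eq, real_inner_comm x z, mul_right_comm t ‖x‖]

theorem zero_right (t : ℝ) : circularCone t (0 : E) = ∅ := by
  simp [circularCone]

theorem smul_right {c : ℝ} (hc : 0 < c) (t : ℝ) (z : E) :
    circularCone t (c • z) = circularCone t z := by
  ext x
  simp only [circularCone, Set.mem_ofPred_eq, norm_smul, inner_smul_right,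
    Real.norm_of_nonneg hc.le]
  rw [mul_left_comm, mul_lt_mul_iff_right₀ hc]

theorem preimage_linearIsometryEquiv (R : E ≃ₗᵢ[ℝ] E) (t : ℝ) (z : E) :
    R ⁻¹' circularCone t (R z) = circularCone t z := by
  ext x
  simp [circularCone]

theorem isOpen_setOf_mem (t : ℝ) : IsOpen {p : E × E | p.1 ∈ circularCone t p.2} := by
  simp only [circularCone, Set.mem_ofPred_eq]
  exact isOpen_lt (by fun_prop) (by fun_prop)

theorem isOpen (t : ℝ) (z : E) : IsOpen (circularCone t z) :=
  isOpen_lt (by fun_prop) (by fun_prop)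

theorem inter_ball_subset_closedBall {t : ℝ} (ht0 : 0 ≤ t) (ht : t ^ 2 ≤ 1 / 2) (z : E) :
    circularCone t z ∩ ball 0 1 ⊆ closedBall ((t / ‖z‖) • z) √(1 - t ^ 2) := by
  rintro y ⟨hy, hy1⟩
  rcases eq_or_ne z 0 with rfl | hz
  · simp [zero_right] at hy
  have hz' : 0 < ‖z‖ := norm_pos_iff.mpr hz
  have hinner : t * ‖y‖ ≤ inner ℝ y z / ‖z‖ := (le_div_iff₀ hz').mpr (le_of_lt hy)
  have hnorm : ‖(t / ‖z‖) • z‖ = t := by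
    rw [norm_smul, Real.norm_of_nonneg (by positivity), div_mul_cancel₀ _ hz'.ne']
  have hdist : ‖y - (t / ‖z‖) • z‖ ^ 2 ≤ ‖y‖ ^ 2 - 2 * t ^ 2 * ‖y‖ + t ^ 2 := by
    rw [norm_sub_sq_real, hnorm, inner_smul_right, div_mul_eq_mul_div, mul_div_assoc]
    linarith [mul_le_mul_of_nonneg_left hinner ht0]
  rw [mem_ball_zero_iff] at hy1
  rw [mem_closedBall, dist_eq_norm]
  apply Real.le_sqrt_of_sq_le
  have hfactor : 0 ≤ (1 - ‖y‖) * (1 + ‖y‖ - 2 * t ^ 2) :=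
    mul_nonneg (by linarith) (by linarith [norm_nonneg y])
  linarith

variable [MeasurableSpace E] [BorelSpace E]

theorem measure_eq_of_invariant {μ : Measure E} (hrot : ∀ R : E ≃ₗᵢ[ℝ] E, μ.map R = μ) (t : ℝ)
    {y z : E} (hy : y ≠ 0) (hz : z ≠ 0) :
    μ (circularCone t y) = μ (circularCone t z) := by
  have hc : 0 < ‖z‖ / ‖y‖ := div_pos (norm_pos_iff.mpr hz) (norm_pos_iff.mpr hy)
  set w := (‖z‖ / ‖y‖) • y with hw
  have hwz : ‖w‖ = ‖z‖ := by
    rw [hw, norm_smul, Real.norm_of_nonneg hc.le, div_mul_cancel₀ _ (norm_ne_zero_iff.mpr hy)]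
  set R := (ℝ ∙ (w - z))ᗮ.reflection
  have hRw : R w = z := Submodule.reflection_sub hwz
  calc μ (circularCone t y) = μ (circularCone t w) := by rw [hw, smul_right hc]
    _ = μ (R ⁻¹' circularCone t (R w)) := by rw [preimage_linearIsometryEquiv]
    _ = μ.map R (circularCone t (R w)) :=
        (Measure.map_apply R.continuous.measurable (isOpen t _).measurableSet).symm
    _ = μ (circularCone t z) := by rw [hrot, hRw]

variable [FiniteDimensional ℝ E]

theorem lintegral_measure_comm (μ ν : Measure E) [SFinite μ] [SFinite ν] (t : ℝ) :
    ∫⁻ y, μ (circularCone t y) ∂ν = ∫⁻ x, ν (circularCone t x) ∂μ := by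
  have hmeas := (isOpen_setOf_mem (E := E) t).measurableSet
  calc ∫⁻ y, μ (circularCone t y) ∂ν = (μ.prod ν) {p | p.1 ∈ circularCone t p.2} :=
        (Measure.prod_apply_symm hmeas).symm
    _ = ∫⁻ x, ν {y | x ∈ circularCone t y} ∂μ := Measure.prod_apply hmeas
    _ = ∫⁻ x, ν (circularCone t x) ∂μ := by simp only [mem_comm, Set.ofPred_mem_eq]

theorem volume_restrict_ball_le {t : ℝ} (ht0 : 0 ≤ t) (ht : t ^ 2 ≤ 1 / 2) (z : E) :
    volume.restrict (ball 0 1) (circularCone t z) ≤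
      ENNReal.ofReal (√(1 - t ^ 2) ^ Module.finrank ℝ E) * volume (ball (0 : E) 1) := by
  rw [Measure.restrict_apply (isOpen t z).measurableSet,
    ← Measure.addHaar_closedBall _ ((t / ‖z‖) • z) (Real.sqrt_nonneg _)]
  exact measure_mono (inter_ball_subset_closedBall ht0 ht z)

theorem measure_le_of_invariant {μ : Measure E} [SFinite μ]
    (hrot : ∀ R : E ≃ₗᵢ[ℝ] E, μ.map R = μ) {t : ℝ} (ht0 : 0 ≤ t) (ht : t ^ 2 ≤ 1 / 2) (z : E) :
    μ (circularCone t z) ≤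
      ENNReal.ofReal (√(1 - t ^ 2) ^ Module.finrank ℝ E) * μ Set.univ := by
  rcases eq_or_ne z 0 with rfl | hz
  · simp [zero_right]
  have : Nontrivial E := ⟨z, 0, hz⟩
  set c := ENNReal.ofReal (√(1 - t ^ 2) ^ Module.finrank ℝ E)
  set B := ball (0 : E) 1
  have hconst : ∀ᵐ y ∂volume.restrict B, μ (circularCone t y) = μ (circularCone t z) := by
    filter_upwards [ae_restrict_of_ae (Measure.ae_ne volume (0 : E))] with y hy
    exact measure_eq_of_invariant hrot t hy hz
  have hmul : μ (circularCone t z) * volume B ≤ c * μ Set.univ * volume B :=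
    calc μ (circularCone t z) * volume B
        = ∫⁻ y in B, μ (circularCone t y) := by rw [lintegral_congr_ae hconst, setLIntegral_const]
      _ = ∫⁻ x, volume.restrict B (circularCone t x) ∂μ := lintegral_measure_comm ..
      _ ≤ ∫⁻ _, c * volume B ∂μ := lintegral_mono fun x => volume_restrict_ball_le ht0 ht x
      _ = c * μ Set.univ * volume B := by rw [lintegral_const, mul_right_comm]
  exact (ENNReal.mul_le_mul_iff_left (measure_ball_pos volume _ one_pos).ne'
    measure_ball_lt_top.ne).mp hmul

theorem measureReal_le_of_invariant {μ : Measure E} [IsProbabilityMeasure μ]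
    (hrot : ∀ R : E ≃ₗᵢ[ℝ] E, μ.map R = μ) {t : ℝ} (ht0 : 0 ≤ t) (ht : t ^ 2 ≤ 1 / 2) (z : E) :
    μ.real (circularCone t z) ≤ √(1 - t ^ 2) ^ Module.finrank ℝ E := by
  have h := measure_le_of_invariant hrot ht0 ht z
  rw [measure_univ, mul_one] at h
  exact ENNReal.toReal_le_of_le_ofReal (by positivity) h

end circularCone

theorem norm_add_le_dist_of_notMem_circularCone {r ε : ℝ} (hε0 : 0 ≤ ε) (hε : ε ≤ 4) {x z : E}
    (hx : ‖x‖ ≤ r) (hz : ε * r ≤ ‖z‖) (hxz : x ∉ circularCone (ε / 4) z) :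
    ‖x‖ + r * ε ^ 2 / 8 ≤ dist z x := by
  have hr : 0 ≤ r := (norm_nonneg x).trans hx
  have hinner : inner ℝ z x ≤ ‖z‖ ^ 2 / 4 := by
    rw [real_inner_comm]
    calc inner ℝ x z ≤ ε / 4 * ‖x‖ * ‖z‖ := not_lt.mp hxz
      _ = ε * ‖x‖ * ‖z‖ / 4 := by ring
      _ ≤ ε * r * ‖z‖ / 4 := by gcongr
      _ ≤ ‖z‖ * ‖z‖ / 4 := by gcongr
      _ = ‖z‖ ^ 2 / 4 := by ring
  have hcross : ‖x‖ * (r * ε ^ 2) ≤ r * (r * ε ^ 2) := by gcongr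
  have hquartic : (r * ε ^ 2) ^ 2 ≤ 16 * (ε * r) ^ 2 :=
    calc (r * ε ^ 2) ^ 2 = ε ^ 2 * (ε * r) ^ 2 := by ring
      _ ≤ 4 ^ 2 * (ε * r) ^ 2 := by gcongr
      _ = 16 * (ε * r) ^ 2 := by norm_num
  have hnorm : (ε * r) ^ 2 ≤ ‖z‖ ^ 2 := by gcongr
  rw [dist_eq_norm]
  refine le_of_sq_le_sq ?_ (norm_nonneg _)
  calc (‖x‖ + r * ε ^ 2 / 8) ^ 2
      = ‖x‖ ^ 2 + ‖x‖ * (r * ε ^ 2) / 4 + (r * ε ^ 2) ^ 2 / 64 := by ring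
    _ ≤ ‖x‖ ^ 2 + ‖z‖ ^ 2 / 2 := by linarith
    _ ≤ ‖z - x‖ ^ 2 := by rw [norm_sub_sq_real]; linarith

end CircularCone

section TentPotential

variable {X : Type*} [PseudoMetricSpace X] [MeasurableSpace X]

/-- The potential at `p` of `μ` for the tent kernel `(α - d)⁺` of radius `α`. For `μ` carried by
`B_r(0)` and `r ≤ α`, the quantity `H` is the difference of its values at `0` and at `z`. -/
noncomputable def tentPotential (α : ℝ) (μ : Measure X) (p : X) : ℝ :=
  ∫ x, max (α - dist p x) 0 ∂μ

variable [OpensMeasurableSpace X] {μ : Measure X}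

theorem setIntegral_closedBall_inter_eq_tentPotential {s : Set X} (hs : ∀ᵐ x ∂μ, x ∈ s)
    (α : ℝ) (p : X) :
    ∫ x in closedBall p α ∩ s, (α - dist p x) ∂μ = tentPotential α μ p := by
  have hball : (closedBall p α ∩ s : Set X) =ᵐ[μ] closedBall p α :=
    inter_ae_eq_left_of_ae_eq_univ (Filter.eventuallyEq_univ.mpr hs)
  rw [setIntegral_congr_set hball, ← integral_indicator measurableSet_closedBall, tentPotential]
  congr 1 with x
  by_cases hx : x ∈ closedBall p α
  · rw [Set.indicator_of_mem hx, max_eq_left (sub_nonneg.mpr (mem_closedBall'.mp hx))]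
  · rw [Set.indicator_of_notMem hx, max_eq_right]
    rw [mem_closedBall', not_le] at hx
    linarith

theorem integrable_tent [IsFiniteMeasure μ] (α : ℝ) (p : X) :
    Integrable (fun x => max (α - dist p x) 0) μ := by
  refine Integrable.of_bound (C := |α|) (by fun_prop) (.of_forall fun x => ?_)
  rw [Real.norm_of_nonneg (le_max_right _ _)]
  exact max_le (by linarith [le_abs_self α, dist_nonneg (x := p) (y := x)]) (abs_nonneg α)

theorem le_tentPotential_sub_tentPotential [IsProbabilityMeasure μ] {α r δ : ℝ} (hα : 0 ≤ α)
    (hrα : r + δ ≤ α) {p q : X} {s : Set X} (hs : MeasurableSet s)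
    (hr : ∀ᵐ x ∂μ, dist p x ≤ r) (hδ : ∀ᵐ x ∂μ, x ∉ s → dist p x + δ ≤ dist q x) :
    δ - (r + δ) * μ.real s ≤ tentPotential α μ p - tentPotential α μ q := by
  have hint : Integrable (s.indicator fun _ => r + δ) μ := (integrable_const _).indicator hs
  calc δ - (r + δ) * μ.real s = ∫ x, (δ - s.indicator (fun _ => r + δ) x) ∂μ := by
        rw [integral_sub (integrable_const _) hint, integral_indicator_const _ hs, integral_const,
          probReal_univ, one_smul, smul_eq_mul, mul_comm]
    _ ≤ ∫ x, (max (α - dist p x) 0 - max (α - dist q x) 0) ∂μ := by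
        refine integral_mono_ae ((integrable_const _).sub hint)
          ((integrable_tent α p).sub (integrable_tent α q)) ?_
        filter_upwards [hr, hδ] with x hxr hxδ
        have hp : α - dist p x ≤ max (α - dist p x) 0 := le_max_left _ _
        by_cases hx : x ∈ s
        · have hq : max (α - dist q x) 0 ≤ α := max_le (sub_le_self _ dist_nonneg) hα
          rw [Set.indicator_of_mem hx]
          linarith
        · have hq : max (α - dist q x) 0 ≤ α - dist p x - δ :=
            max_le (by linarith [hxδ hx]) (by linarith)
          rw [Set.indicator_of_notMem hx]
          linarith
    _ = tentPotential α μ p - tentPotential α μ q :=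
        integral_sub (integrable_tent α p) (integrable_tent α q)

end TentPotential

theorem one_add_mul_sqrt_pow_le_sqrt_pi_mul_rpow {m : ℕ} (hm : 1 ≤ m) {ε : ℝ} (hε0 : 0 ≤ ε)
    (hε : ε ≤ 1) :
    (1 + ε ^ 2 / 8) * √(1 - ε ^ 2 / 16) ^ m ≤
      √(π * m / 2) * (1 - ε ^ 2 / 16) ^ (((m : ℝ) - 2) / 2) := by
  have hε2 : ε ^ 2 ≤ 1 := pow_le_one₀ hε0 hε
  have hq0 : 0 < 1 - ε ^ 2 / 16 := by linarith
  have hconst : 1 + ε ^ 2 / 8 ≤ √(π * m / 2) :=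
    calc 1 + ε ^ 2 / 8 ≤ √(3 * 1 / 2) := Real.le_sqrt_of_sq_le (by nlinarith)
      _ ≤ √(π * m / 2) := by gcongr; exacts [Real.pi_gt_three.le, mod_cast hm]
  have hpow : √(1 - ε ^ 2 / 16) ^ m ≤ (1 - ε ^ 2 / 16) ^ (((m : ℝ) - 2) / 2) := by
    rw [Real.sqrt_eq_rpow, ← Real.rpow_mul_natCast hq0.le]
    exact Real.rpow_le_rpow_of_exponent_ge hq0 (by linarith [sq_nonneg ε]) (by linarith)
  gcongr

theorem stmt13_general {E : Type*} [NormedAddCommGroup E] [InnerProductSpace ℝ E]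
    [FiniteDimensional ℝ E] [MeasurableSpace E] [BorelSpace E] {r ε α : ℝ} (hε0 : 0 ≤ ε)
    (hε : ε ^ 2 ≤ 8) (hα : r * (1 + ε ^ 2 / 8) ≤ α) {μ : Measure E} [IsProbabilityMeasure μ]
    (hsupp : μ (closedBall 0 r) = 1) (hrot : ∀ R : E ≃ₗᵢ[ℝ] E, μ.map R = μ) {z : E}
    (hz : ε * r ≤ ‖z‖) :
    r * ε ^ 2 / 8 - r * ((1 + ε ^ 2 / 8) * √(1 - ε ^ 2 / 16) ^ Module.finrank ℝ E) ≤
      (∫ x in closedBall (0 : E) r, (α - ‖x‖) ∂μ) -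
        ∫ x in closedBall z α ∩ closedBall (0 : E) r, (α - dist z x) ∂μ := by
  have hae : ∀ᵐ x ∂μ, x ∈ closedBall (0 : E) r :=
    (mem_ae_iff_prob_eq_one measurableSet_closedBall).mpr hsupp
  have hr : 0 ≤ r := hae.exists.elim fun _ hx => nonempty_closedBall.mp ⟨_, hx⟩
  have hrα : r ≤ α := (le_mul_of_one_le_right hr (by linarith [sq_nonneg ε])).trans hα
  have hcone : μ.real (circularCone (ε / 4) z) ≤ √(1 - ε ^ 2 / 16) ^ Module.finrank ℝ E := by
    rw [show ε ^ 2 / 16 = (ε / 4) ^ 2 by ring]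
    exact circularCone.measureReal_le_of_invariant hrot (by positivity) (by linarith) z
  have hdrop : r * ε ^ 2 / 8 - (r + r * ε ^ 2 / 8) * μ.real (circularCone (ε / 4) z) ≤
      tentPotential α μ 0 - tentPotential α μ z := by
    refine le_tentPotential_sub_tentPotential (hr.trans hrα) (by linarith)
      (circularCone.isOpen _ z).measurableSet (hae.mono fun x => mem_closedBall'.mp) ?_
    filter_upwards [hae] with x hx hxz
    rw [dist_zero_left]
    exact norm_add_le_dist_of_notMem_circularCone hε0 (by nlinarith)
      (mem_closedBall_zero_iff.mp hx) hz hxz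
  have h0 : ∫ x in closedBall (0 : E) r, (α - ‖x‖) ∂μ = tentPotential α μ 0 := by
    rw [← setIntegral_closedBall_inter_eq_tentPotential hae,
      Set.inter_eq_right.mpr (closedBall_subset_closedBall hrα)]
    simp only [dist_zero_left]
  rw [h0, setIntegral_closedBall_inter_eq_tentPotential hae]
  refine le_trans ?_ hdrop
  linarith [mul_le_mul_of_nonneg_left hcone (show 0 ≤ r * (1 + ε ^ 2 / 8) by positivity)]

/-- For `m ≥ 2`, `μ` a rotation-invariant probability measure on `B_r(0) ⊂ ℝ^m`,
`ε ∈ (0,1)` and `α = r(1+ε)`: for every `z ∈ B_r(0)` with `‖z‖ ≥ εr`,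
`H^{(α,μ,m)}(z) ≥ rε²/8 − r √(πm/2) (1 − ε²/16)^{(m−2)/2}`. -/
theorem stmt13 (m : ℕ) (hm : 2 ≤ m) (r ε : ℝ) (hr : 0 < r) (hε : ε ∈ Set.Ioo (0 : ℝ) 1)
    (μ : Measure (EuclideanSpace ℝ (Fin m))) [IsProbabilityMeasure μ]
    (hsupp : μ (closedBall 0 r) = 1)
    (hrot : ∀ R : EuclideanSpace ℝ (Fin m) ≃ₗᵢ[ℝ] EuclideanSpace ℝ (Fin m),
      μ.map R = μ) :
    ∀ z ∈ closedBall (0 : EuclideanSpace ℝ (Fin m)) r, ε * r ≤ ‖z‖ →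
      r * ε ^ 2 / 8 -
          r * Real.sqrt (π * m / 2) * (1 - ε ^ 2 / 16) ^ (((m : ℝ) - 2) / 2) ≤
        Hfun m (r * (1 + ε)) r μ z := by
  intro z _ hz
  refine le_trans ?_ (stmt13_general hε.1.le (by nlinarith [hε.1, hε.2])
    (by gcongr; nlinarith [hε.1, hε.2]) hsupp hrot hz)
  grw [finrank_euclideanSpace_fin, mul_assoc,
    one_add_mul_sqrt_pow_le_sqrt_pi_mul_rpow (one_le_two.trans hm) hε.1.le hε.2.le]
end
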